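/- arXiv:1604.07200 — 10 statements merged into one kernel-verified Lean document; each statement's English description precedes it below -/
import Mathlib

section
/- Let F be a finite field and d ≥ 1. Then the bipartite graph P_d has projective dimension exactly d over F: assigning to each vertex of P_d (which is a subspace of F^d) the subspace itself is a projective realization of P_d of dimension d over F, and every projective realization of P_d over F has dimension at least d. -/
/-- A projective realization of a bipartite graph with vertex sets `U`, `V` and
edge relation `E` over a field `F`, of dimension `D`: subspaces of `F^D` are
assigned to the vertices so that an edge is present iff the corresponding
subspaces intersect nontrivially. -/
def IsProjRealization (F : Type) [Field F] {U V : Type} (E : U → V → Prop) (D : ℕ)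
    (φU : U → Submodule F (Fin D → F)) (φV : V → Submodule F (Fin D → F)) : Prop :=
  ∀ u v, E u v ↔ φU u ⊓ φV v ≠ ⊥

/-- The edge relation of the bipartite graph `P_d`: both vertex sets are the set of
all `F`-linear subspaces of `F^d`, with an edge between `I` and `J` iff `I ∩ J ≠ {0}`. -/
def PdEdge (F : Type) [Field F] (d : ℕ) (I J : Submodule F (Fin d → F)) : Prop :=
  I ⊓ J ≠ ⊥

/-- The bipartite graph `P_d` has projective dimension exactly `d` over a finite
field `F`: the identity assignment is a realization of dimension `d`, and every
realization has dimension at least `d`. -/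
theorem stmt_0 (F : Type) [Field F] [Fintype F] (d : ℕ) (hd : 1 ≤ d) :
    IsProjRealization F (PdEdge F d) d id id ∧
      ∀ (D : ℕ) (φU φV : Submodule F (Fin d → F) → Submodule F (Fin D → F)),
        IsProjRealization F (PdEdge F d) D φU φV → d ≤ D := by
  refine ⟨fun u v => Iff.rfl, ?_⟩
  intro D φU φV h
  have key : ∀ I I' : Submodule F (Fin d → F), φU I = φU I' → I ≤ I' := by
    intro I I' hI x hx
    by_cases hx0 : x = 0
    · rw [hx0]; exact I'.zero_mem
    have h1 : PdEdge F d I (Submodule.span F {x}) := by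
      intro hb
      have hm : x ∈ I ⊓ Submodule.span F {x} := ⟨hx, Submodule.mem_span_singleton_self x⟩
      rw [hb] at hm
      exact hx0 ((Submodule.mem_bot F).1 hm)
    have h2 : PdEdge F d I' (Submodule.span F {x}) := by
      rw [h, ← hI, ← h]
      exact h1
    obtain ⟨y, ⟨hy1, hy2⟩, hy0⟩ := Submodule.exists_mem_ne_zero_of_ne_bot h2
    obtain ⟨c, rfl⟩ := Submodule.mem_span_singleton.1 hy2
    have hc : c ≠ 0 := by
      rintro rfl
      exact hy0 (zero_smul _ _)
    exact (Submodule.smul_mem_iff I' hc).1 hy1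
  have inj : Function.Injective φU := fun I I' e => le_antisymm (key _ _ e) (key _ _ e.symm)
  by_contra hlt
  have hDd : D ≤ d := by omega
  obtain ⟨f, hf⟩ : ∃ f : (Fin D → F) →ₗ[F] (Fin d → F), Function.Injective f :=
    ⟨Function.ExtendByZero.linearMap F (Fin.castLE hDd),
      Function.extend_injective (Fin.castLE_injective hDd) 0⟩
  have hinj : Function.Injective (fun I => (φU I).map f) :=
    (Submodule.map_injective_of_injective hf).comp inj
  haveI : Finite (Submodule F (Fin d → F)) :=
    Finite.of_injective (fun I => (I : Set (Fin d → F))) SetLike.coe_injective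
  obtain ⟨I, hI⟩ := (Finite.injective_iff_surjective.1 hinj) ⊤
  have h3 : Module.finrank F ((φU I).map f) ≤ Module.finrank F (φU I) :=
    Submodule.finrank_map_le f (φU I)
  have h4 : Module.finrank F (φU I) ≤ D := by
    simpa using Submodule.finrank_le (φU I)
  simp only at hI
  rw [hI, finrank_top] at h3
  simp only [Module.finrank_fin_fun] at h3
  omega
end

section
/- For every d ≥ 1, the projective dimension over F_2 of the bipartite realization G_{SI_d} of SI_d equals d: the map assigning to each d×d matrix over F_2 its rowspan (a subspace of F_2^d) is a projective realization of G_{SI_d} of dimension d over F_2, and every projective realization of G_{SI_d} over F_2 has dimension at least d. -/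
/-- The row span (over `F_2`) of a `d × d` matrix over `F_2`. -/
def rowSpan (d : ℕ) (A : Matrix (Fin d) (Fin d) (ZMod 2)) :
    Submodule (ZMod 2) (Fin d → ZMod 2) :=
  Submodule.span (ZMod 2) (Set.range A)

/-- The edge relation of the bipartite realization `G_{SI_d}` of `SI_d`: both vertex
sets are the `d × d` matrices over `F_2`, with an edge `(A, B)` iff
`rowspan(A) ∩ rowspan(B) ≠ {0}`. -/
def SIedge (d : ℕ) (A B : Matrix (Fin d) (Fin d) (ZMod 2)) : Prop :=
  rowSpan d A ⊓ rowSpan d B ≠ ⊥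

theorem exists_rowSpan_eq (d : ℕ) (W : Submodule (ZMod 2) (Fin d → ZMod 2)) :
    ∃ A, rowSpan d A = W := by
  obtain ⟨p, hp⟩ := W.subtype.exists_leftInverse_of_injective (by simp)
  let q := W.subtype ∘ₗ p
  refine ⟨fun i => q (Pi.single i 1), ?_⟩
  have h1 : LinearMap.range q = W := by
    have : LinearMap.range p = ⊤ := LinearMap.range_eq_top.2 fun w =>
      ⟨w, by simpa using LinearMap.congr_fun hp w⟩
    rw [LinearMap.range_comp, this, Submodule.map_top, Submodule.range_subtype]
  have h2 := (Pi.basisFun (ZMod 2) (Fin d)).span_eq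
  rw [← h1, LinearMap.range_eq_map, ← h2, Submodule.map_span, ← Set.range_comp]
  unfold rowSpan
  congr 2
  funext i
  simp

theorem le_of_meets {d : ℕ} {W₁ W₂ : Submodule (ZMod 2) (Fin d → ZMod 2)}
    (h : ∀ X, W₁ ⊓ X ≠ ⊥ → W₂ ⊓ X ≠ ⊥) : W₁ ≤ W₂ := by
  intro w hw
  by_cases h0 : w = 0
  · simp [h0]
  have h1 := h (Submodule.span (ZMod 2) {w})
  rw [Ne, Ne, ← disjoint_iff, ← disjoint_iff, Submodule.disjoint_span_singleton' h0,
    Submodule.disjoint_span_singleton' h0] at h1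
  tauto

/-- The projective dimension of `G_{SI_d}` over `F_2` equals `d`: the rowspan map is a
realization of dimension `d`, and every realization has dimension at least `d`. -/
theorem stmt_1 (d : ℕ) (hd : 1 ≤ d) :
    IsProjRealization (ZMod 2) (SIedge d) d (rowSpan d) (rowSpan d) ∧
      ∀ (D : ℕ)
        (φU φV : Matrix (Fin d) (Fin d) (ZMod 2) → Submodule (ZMod 2) (Fin D → ZMod 2)),
        IsProjRealization (ZMod 2) (SIedge d) D φU φV → d ≤ D := by
  refine ⟨fun _ _ => Iff.rfl, fun D φU φV h => ?_⟩
  choose A hA using exists_rowSpan_eq d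
  have key : ∀ W X, W ⊓ X ≠ ⊥ ↔ φU (A W) ⊓ φV (A X) ≠ ⊥ := fun W X => by
    rw [← h, SIedge, hA, hA]
  have hf : Function.Injective fun W => φU (A W) := by
    intro W₁ W₂ e
    have e' : φU (A W₁) = φU (A W₂) := e
    apply le_antisymm
    · exact le_of_meets fun X hX => by rwa [key, ← e', ← key]
    · exact le_of_meets fun X hX => by rwa [key, e', ← key]
  by_contra! hlt
  let ι : (Fin D → ZMod 2) →ₗ[ZMod 2] (Fin d → ZMod 2) :=
    Function.ExtendByZero.linearMap (ZMod 2) (Fin.castLE hlt.le)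
  have hι : Function.Injective ι := by
    intro x y hxy
    funext i
    have := congrFun hxy (Fin.castLE hlt.le i)
    simpa [ι, (Fin.castLE_injective hlt.le).extend_apply] using this
  have hinj := (Submodule.map_injective_of_injective hι).comp hf
  obtain ⟨W, hW⟩ := (Finite.injective_iff_surjective.1 hinj) ⊤
  have hsurj : Function.Surjective ι := by
    rw [← LinearMap.range_eq_top, eq_top_iff, ← hW]
    exact LinearMap.map_le_range
  have := LinearMap.finrank_le_finrank_of_injective
    (f := (LinearEquiv.ofBijective ι ⟨hι, hsurj⟩).symm.toLinearMap) (LinearEquiv.injective _)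
  simp at this
  omega
end

section
/- Let F be a finite field with q elements and let d ≥ 1. Let M be the real matrix whose rows and columns are both indexed by the set of all F-linear subspaces of F^d, with M(I,J) = 1 if I ∩ J ≠ {0} and M(I,J) = 0 otherwise. Then the rank of M over ℝ is at least N_{⌊d/2⌋} − 1, where N_k denotes the number of k-dimensional F-linear subspaces of F^d; consequently rank_ℝ(M) ≥ q^{⌊d/2⌋·⌈d/2⌉} − 1. -/
open scoped Classical

noncomputable instance (F : Type) [Field F] [Fintype F] (d : ℕ) :
    Fintype (Submodule F (Fin d → F)) :=
  Fintype.ofFinite _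

theorem aux_zeta_inj {P : Type*} [PartialOrder P] [Fintype P] (v : P → ℝ)
    (h : ∀ Y, ∑ X, (if X ≤ Y then v X else 0) = 0) : v = 0 := by
  funext Y
  induction Y using WellFoundedLT.induction with
  | ind Y ih =>
    have h1 := h Y
    rw [Finset.sum_eq_single Y] at h1
    · simpa using h1
    · intro X _ hX
      split_ifs with hle
      · exact ih X (lt_of_le_of_ne hle hX)
      · rfl
    · simp

theorem aux_zeta_inj' {P : Type*} [PartialOrder P] [Fintype P] (v : P → ℝ)
    (h : ∀ Y, ∑ X, (if Y ≤ X then v X else 0) = 0) : v = 0 := by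
  funext Y
  induction Y using WellFoundedGT.induction with
  | ind Y ih =>
    have h1 := h Y
    rw [Finset.sum_eq_single Y] at h1
    · simpa using h1
    · intro X _ hX
      split_ifs with hle
      · exact ih X (lt_of_le_of_ne hle (Ne.symm hX))
      · rfl
    · simp

theorem aux_exists_mu {P : Type*} [PartialOrder P] [Fintype P] (e : P → ℝ) :
    ∃ m : P → ℝ, ∀ Y, ∑ X, (if X ≤ Y then m X else 0) = e Y := by
  let A : Matrix P P ℝ := Matrix.of fun Y X => if X ≤ Y then 1 else 0
  have hA : ∀ v Y, A.mulVecLin v Y = ∑ X, (if X ≤ Y then v X else 0) := by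
    intro v Y
    simp [A, Matrix.mulVec, dotProduct]
  have hinj : Function.Injective A.mulVecLin := by
    rw [injective_iff_map_eq_zero]
    intro v hv
    apply aux_zeta_inj
    intro Y
    rw [← hA, hv]; rfl
  obtain ⟨m, hm⟩ := (LinearMap.injective_iff_surjective.mp hinj) e
  exact ⟨m, fun Y => by rw [← hA, hm]⟩

theorem aux_rank_add {n : Type*} [Fintype n] (A B : Matrix n n ℝ) :
    (A + B).rank ≤ A.rank + B.rank := by
  unfold Matrix.rank
  rw [Matrix.mulVecLin_add]
  exact (Submodule.finrank_mono (LinearMap.range_add_le _ _)).trans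
    (Submodule.finrank_add_le_finrank_add_finrank _ _)

section
variable {F V : Type*} [Field F] [AddCommGroup V] [Module F V] [FiniteDimensional F V]
  [Fintype (Submodule F V)]

theorem aux_weisner (m : Submodule F V → ℝ)
    (hm : ∀ Y, ∑ X, (if X ≤ Y then m X else 0) = if Y = ⊥ then 1 else 0)
    (L : Submodule F V) (hL : L ≠ ⊥) (Y : Submodule F V) :
    ∑ X, (if X ⊔ L = Y then m X else 0) = 0 := by
  have := aux_zeta_inj (fun Z => ∑ X, (if X ⊔ L = Z then m X else 0)) ?_
  · exact congrFun this Y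
  intro Y
  have h1 : ∀ Z, (if Z ≤ Y then ∑ X, (if X ⊔ L = Z then m X else 0) else 0)
      = ∑ X, (if X ⊔ L = Z then (if Z ≤ Y then m X else 0) else 0) := by
    intro Z
    split_ifs <;> simp
  simp only [h1]
  rw [Finset.sum_comm]
  simp only [Finset.sum_ite_eq, Finset.mem_univ, if_true, sup_le_iff]
  by_cases hLY : L ≤ Y
  · simp only [hLY, and_true, hm]
    rw [if_neg]
    rintro rfl
    exact hL (le_bot_iff.mp hLY)
  · simp [hLY]

theorem aux_mu_sign (m : Submodule F V → ℝ)
    (hm : ∀ Y, ∑ X, (if X ≤ Y then m X else 0) = if Y = ⊥ then 1 else 0)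
    (n : ℕ) : ∀ Y : Submodule F V, Module.finrank F Y = n → 0 < (-1 : ℝ) ^ n * m Y := by
  induction n with
  | zero =>
    intro Y hY
    have hY : Y = ⊥ := Submodule.finrank_eq_zero.mp hY
    subst hY
    have := hm ⊥
    simp at this
    simp [this]
  | succ n ih =>
    intro Y hY
    have hne : Y ≠ ⊥ := by
      rintro rfl
      simp at hY
    obtain ⟨y, hyY, hy0⟩ := Submodule.exists_mem_ne_zero_of_ne_bot hne
    set L := Submodule.span F {y} with hLdef
    have hLY : L ≤ Y := by rw [hLdef, Submodule.span_singleton_le_iff_mem]; exact hyY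
    have hL : L ≠ ⊥ := by simpa [hLdef] using hy0
    have hL1 : Module.finrank F L = 1 := finrank_span_singleton hy0
    have hw := aux_weisner m hm L hL Y
    rw [← Finset.add_sum_erase _ _ (Finset.mem_univ Y)] at hw
    rw [if_pos (sup_eq_left.mpr hLY)] at hw
    have hpos : 0 < ∑ X ∈ Finset.univ.erase Y, (-1 : ℝ) ^ n * (if X ⊔ L = Y then m X else 0) := by
      have key : ∀ X, X ≠ Y → X ⊔ L = Y → 0 < (-1 : ℝ) ^ n * m X := by
        intro X hXY hX
        apply ih
        have hnL : ¬ L ≤ X := fun h => hXY (by rw [← hX, sup_eq_left.mpr h])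
        have hd : X ⊓ L = ⊥ := by
          have := (nonzero_span_atom (K := F) y hy0)
          have h2 := this.not_le_iff_disjoint.mp hnL
          rw [inf_comm]; exact h2.eq_bot
        have := Submodule.finrank_sup_add_finrank_inf_eq X L
        rw [hX, hd, hL1, hY] at this
        simp at this
        omega
      apply Finset.sum_pos'
      · intro X hX
        split_ifs with h
        · exact (key X (Finset.ne_of_mem_erase hX) h).le
        · simp
      · obtain ⟨C, hC⟩ := exists_isCompl L
        have hs : (C ⊓ Y) ⊔ L = Y := by
          rw [sup_comm, ← sup_inf_assoc_of_le C hLY, hC.sup_eq_top, top_inf_eq]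
        have hn : C ⊓ Y ≠ Y := by
          intro h
          have : L ≤ C := hLY.trans (inf_eq_right.mp h)
          exact hL (hC.disjoint.eq_bot_of_le this)
        refine ⟨C ⊓ Y, by simpa using hn, ?_⟩
        rw [if_pos hs]
        exact key _ hn hs
    rw [← Finset.mul_sum] at hpos
    rw [eq_neg_of_add_eq_zero_left hw, pow_succ]
    linarith

theorem aux_disj_inj (v : Submodule F V → ℝ)
    (h : ∀ I, ∑ J, (if I ⊓ J = ⊥ then v J else 0) = 0) : v = 0 := by
  obtain ⟨m, hm⟩ := aux_exists_mu (P := Submodule F V) (fun Y => if Y = ⊥ then 1 else 0)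
  have hm0 : ∀ X, m X ≠ 0 := by
    intro X hX
    have := aux_mu_sign m hm _ X rfl
    simp [hX] at this
  have h1 := aux_zeta_inj (fun X => m X * ∑ J, (if X ≤ J then v J else 0)) ?_
  · apply aux_zeta_inj'
    intro X
    have := congrFun h1 X
    exact (mul_eq_zero.mp this).resolve_left (hm0 X)
  intro I
  refine Eq.trans ?_ (h I)
  have h2 : ∀ J, (if I ⊓ J = ⊥ then v J else 0)
      = ∑ X, (if X ≤ I then m X * (if X ≤ J then v J else 0) else 0) := by
    intro J
    have h3 : (if I ⊓ J = ⊥ then v J else 0) = (if I ⊓ J = ⊥ then 1 else 0) * v J := by simp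
    rw [h3, ← hm, Finset.sum_mul]
    refine Finset.sum_congr rfl fun X _ => ?_
    by_cases ha : X ≤ I <;> by_cases hb : X ≤ J <;> simp [ha, hb]
  simp only [h2]
  rw [Finset.sum_comm]
  refine Finset.sum_congr rfl fun X _ => ?_
  split_ifs
  · rw [Finset.mul_sum]
  · simp

theorem aux_rank (M : Matrix (Submodule F V) (Submodule F V) ℝ)
    (hM : ∀ I J, M I J = if I ⊓ J ≠ ⊥ then 1 else 0) :
    Fintype.card (Submodule F V) ≤ M.rank + 1 := by
  let D : Matrix (Submodule F V) (Submodule F V) ℝ :=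
    Matrix.of fun I J => if I ⊓ J = ⊥ then 1 else 0
  have hD : D.rank = Fintype.card (Submodule F V) := by
    have hinj : Function.Injective D.mulVecLin := by
      rw [injective_iff_map_eq_zero]
      intro v hv
      apply aux_disj_inj
      intro I
      have := congrFun hv I
      simpa [D, Matrix.mulVec, dotProduct] using this
    rw [Matrix.rank, LinearMap.finrank_range_of_inj hinj]
    simp
  have hDM : D = Matrix.vecMulVec (fun _ => 1) (fun _ => 1) + M * (-1) := by
    ext I J
    by_cases h : I ⊓ J = ⊥ <;> simp [D, Matrix.vecMulVec, hM, h]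
  rw [← hD, hDM]
  refine (aux_rank_add _ _).trans ?_
  have h1 := Matrix.rank_vecMulVec_le (R := ℝ) (fun _ : Submodule F V => 1) (fun _ : Submodule F V => 1)
  have h2 := Matrix.rank_mul_le_left M (-1 : Matrix (Submodule F V) (Submodule F V) ℝ)
  omega
end

theorem aux_card (F : Type) [Field F] [Fintype F] (a b d : ℕ) (h : a + b = d) :
    Fintype.card F ^ (a * b) ≤ Nat.card (Submodule F (Fin d → F)) := by
  subst h
  let e : ((Fin a → F) × (Fin b → F)) ≃ₗ[F] (Fin (a + b) → F) :=
    LinearEquiv.ofFinrankEq _ _ (by simp)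
  let f : Matrix (Fin b) (Fin a) F → Submodule F (Fin (a + b) → F) :=
    fun A => (LinearMap.graph (Matrix.toLin' A)).map e.toLinearMap
  have hf : Function.Injective f := by
    intro A B hAB
    have h1 := Submodule.map_injective_of_injective e.injective hAB
    apply Matrix.toLin'.injective
    ext1 i
    ext1
    have : ((LinearMap.single F (fun _ => F) i 1, Matrix.toLin' A (LinearMap.single F (fun _ => F) i 1)) : (Fin a → F) × (Fin b → F)) ∈ LinearMap.graph (Matrix.toLin' A) := by
      simp [LinearMap.mem_graph_iff]
    rw [h1, LinearMap.mem_graph_iff] at this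
    exact this
  have := Nat.card_le_card_of_injective f hf
  refine le_trans (le_of_eq ?_) this
  change _ = Nat.card (Fin b → Fin a → F)
  simp [← pow_mul]

/-- Rank lower bound for the bipartite adjacency matrix of `P_d` over `ℝ`:
`rank(M) ≥ N_{⌊d/2⌋} − 1 ≥ q^{⌊d/2⌋·⌈d/2⌉} − 1`, where `N_k` is the number of
`k`-dimensional subspaces of `F^d`. -/
theorem stmt_3 (F : Type) [Field F] [Fintype F] (d : ℕ) (hd : 1 ≤ d)
    (q : ℕ) (hq : q = Fintype.card F)
    (M : Matrix (Submodule F (Fin d → F)) (Submodule F (Fin d → F)) ℝ)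
    (hM : ∀ I J, M I J = if I ⊓ J ≠ ⊥ then 1 else 0)
    (N : ℕ → ℕ)
    (hN : ∀ k, N k = Nat.card {S : Submodule F (Fin d → F) // Module.finrank F ↥S = k}) :
    N (d / 2) - 1 ≤ M.rank ∧ q ^ (d / 2 * ((d + 1) / 2)) - 1 ≤ M.rank := by
  have h1 := aux_rank M hM
  have h2 := aux_card F (d / 2) ((d + 1) / 2) d (by omega)
  have h3 : N (d / 2) ≤ Nat.card (Submodule F (Fin d → F)) := by
    rw [hN]
    exact Nat.card_le_card_of_injective _ Subtype.val_injective
  rw [Nat.card_eq_fintype_card] at h2 h3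
  subst hq
  constructor <;> omega
end

section
/- Let F be a finite field with q elements, let D ∈ ℕ, let G_1,…,G_m and H_1,…,H_{m'} be F-linear subspaces of F^D, and let P be a real polynomial of degree at most s. Define the m × m' real matrix N by N(r,t) = P(q^{dim(G_r ∩ H_t)}). Then the rank of N over ℝ is at most Σ_{i=0}^{s} N_i, where N_i denotes the number of i-dimensional F-linear subspaces of F^D. -/
open Classical in
theorem pow_aux (F : Type) [Field F] [Fintype F] (D s k : ℕ) (hk : k ≤ s)
    [Fintype {S : Submodule F (Fin D → F) // Module.finrank F ↥S < s + 1}]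
    (W : Submodule F (Fin D → F)) :
    (((Fintype.card F : ℕ) : ℝ) ^ Module.finrank F ↥W) ^ k =
      ∑ S : {S : Submodule F (Fin D → F) // Module.finrank F ↥S < s + 1},
        ((Finset.univ.filter
          (fun v : Fin k → (Fin D → F) => Submodule.span F (Set.range v) = S.1)).card : ℝ) *
          (if S.1 ≤ W then 1 else 0) := by
  have h1 : (((Fintype.card F : ℕ) : ℝ) ^ Module.finrank F ↥W) ^ k =
      ∑ v : Fin k → (Fin D → F), (if Submodule.span F (Set.range v) ≤ W then (1:ℝ) else 0) := by
    rw [Finset.sum_boole]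
    have e : {v : Fin k → (Fin D → F) // Submodule.span F (Set.range v) ≤ W} ≃ (Fin k → W) :=
      { toFun := fun v i => ⟨v.1 i, v.2 (Submodule.subset_span ⟨i, rfl⟩)⟩
        invFun := fun w => ⟨fun i => (w i).1, by
          rw [Submodule.span_le]; rintro _ ⟨i, rfl⟩; exact (w i).2⟩
        left_inv := fun v => rfl
        right_inv := fun w => rfl }
    rw [← Fintype.card_subtype, Fintype.card_congr e, Fintype.card_fun, Fintype.card_fin,
      Module.card_eq_pow_finrank (K := F) (V := W)]
    push_cast
    rfl
  rw [h1]
  simp_rw [Finset.card_filter, Nat.cast_sum, Finset.sum_mul]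
  rw [Finset.sum_comm]
  refine Finset.sum_congr rfl fun v _ => ?_
  have hv : Module.finrank F (Submodule.span F (Set.range v)) < s + 1 := by
    have := finrank_range_le_card (R := F) v
    rw [Fintype.card_fin] at this
    unfold Set.finrank at this
    omega
  rw [Finset.sum_eq_single ⟨_, hv⟩]
  · simp
  · intro b _ hb
    have : ¬ (Submodule.span F (Set.range v) = b.1) := fun h => hb (Subtype.ext h.symm)
    simp [this]
  · simp


/-- Rank upper bound for matrices whose entries are a fixed polynomial of degree at
most `s` evaluated at `q^{dim(G_r ∩ H_t)}`: the rank over `ℝ` is at most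
`Σ_{i=0}^{s} N_i`, where `N_i` is the number of `i`-dimensional subspaces of `F^D`. -/
theorem stmt_4 (F : Type) [Field F] [Fintype F] (q : ℕ) (hq : q = Fintype.card F)
    (D m m' s : ℕ)
    (G : Fin m → Submodule F (Fin D → F)) (H : Fin m' → Submodule F (Fin D → F))
    (P : Polynomial ℝ) (hP : P.natDegree ≤ s)
    (N : Matrix (Fin m) (Fin m') ℝ)
    (hN : ∀ r t, N r t = P.eval ((q : ℝ) ^ Module.finrank F ↥(G r ⊓ H t))) :
    N.rank ≤ ∑ i ∈ Finset.range (s + 1),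
      Nat.card {S : Submodule F (Fin D → F) // Module.finrank F ↥S = i} := by
  classical
  subst hq
  let T := {S : Submodule F (Fin D → F) // Module.finrank F ↥S < s + 1}
  haveI : Fintype T := Fintype.ofFinite T
  let A : Matrix (Fin m) T ℝ := fun r S => (if S.1 ≤ G r then 1 else 0) *
    ∑ k ∈ Finset.range (s + 1), P.coeff k * ((Finset.univ.filter
      (fun v : Fin k → (Fin D → F) => Submodule.span F (Set.range v) = S.1)).card : ℝ)
  let B : Matrix T (Fin m') ℝ := fun S t => if S.1 ≤ H t then 1 else 0
  have hAB : N = A * B := by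
    ext r t
    rw [hN, Matrix.mul_apply, Polynomial.eval_eq_sum_range' (Nat.lt_succ_of_le hP)]
    have : ∀ k ∈ Finset.range (s + 1), P.coeff k *
        (((Fintype.card F : ℕ) : ℝ) ^ Module.finrank F ↥(G r ⊓ H t)) ^ k = _ := fun k hk => by
      rw [pow_aux F D s k (by simpa [Nat.lt_succ_iff] using hk) (G r ⊓ H t), Finset.mul_sum]
    rw [Finset.sum_congr rfl this, Finset.sum_comm]
    refine Finset.sum_congr rfl fun S _ => ?_
    simp only [A, B, le_inf_iff]
    by_cases h1 : S.1 ≤ G r <;> by_cases h2 : S.1 ≤ H t <;> simp [h1, h2]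
  have hc : Fintype.card T = ∑ i ∈ Finset.range (s + 1),
      Nat.card {S : Submodule F (Fin D → F) // Module.finrank F ↥S = i} := by
    haveI : Fintype (Submodule F (Fin D → F)) := Fintype.ofFinite _
    simp_rw [Nat.card_eq_fintype_card, Fintype.card_subtype]
    rw [Fintype.card_subtype, Finset.card_eq_sum_card_fiberwise
      (f := fun S : Submodule F (Fin D → F) => Module.finrank F S) (t := Finset.range (s + 1))]
    · refine Finset.sum_congr rfl fun i hi => ?_
      congr 1
      ext S
      simp only [Finset.mem_filter, Finset.mem_univ, true_and, Finset.mem_range] at *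
      omega
    · intro S hS
      simpa using hS
  rw [← hc, hAB]
  exact (Matrix.rank_mul_le_left A B).trans (Matrix.rank_le_card_width A)
end

section
/- Let n ≥ 1 and let G be the equality graph: the bipartite graph with both vertex sets equal to {0,1}^n and an edge (x,y) if and only if x = y. If G has a projective realization of dimension d with intersection dimension 1 over a finite field F with q elements, then 2^n ≤ (q^d − 1)/(q − 1); in particular, over F_2 one must have d ≥ n + 1. -/
/-- Lower bound for projective realizations with intersection dimension `1` of the
equality graph on `{0,1}^n`: any such realization of dimension `d` over a finite
field with `q` elements satisfies `2^n ≤ (q^d − 1)/(q − 1)`; in particular, over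
`F_2` one must have `d ≥ n + 1`. -/
theorem stmt_6 (n : ℕ) (hn : 1 ≤ n) (F : Type) [Field F] [Fintype F]
    (q : ℕ) (hq : q = Fintype.card F)
    (d : ℕ) (φX φY : (Fin n → Bool) → Submodule F (Fin d → F))
    (hreal : ∀ x y : Fin n → Bool, x = y ↔ φX x ⊓ φY y ≠ ⊥)
    (hint : ∀ x y : Fin n → Bool, Module.finrank F ↥(φX x ⊓ φY y) ≤ 1) :
    2 ^ n ≤ (q ^ d - 1) / (q - 1) ∧ (q = 2 → n + 1 ≤ d) := by
  classical
  have hv : ∀ x, ∃ v ∈ φX x ⊓ φY x, v ≠ 0 := fun x =>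
    Submodule.exists_mem_ne_zero_of_ne_bot ((hreal x x).1 rfl)
  choose v hm h0 using hv
  have hinj : Function.Injective (fun p : (Fin n → Bool) × Fˣ =>
      (⟨(p.2 : F) • v p.1, smul_ne_zero p.2.ne_zero (h0 p.1)⟩ : {w : Fin d → F // w ≠ 0})) := by
    rintro ⟨x, c⟩ ⟨y, e⟩ h
    have h : (c : F) • v x = (e : F) • v y := congrArg Subtype.val h
    have hxy : x = y := by
      rw [hreal x y]
      refine (Submodule.ne_bot_iff _).2 ⟨(c : F) • v x, ⟨?_, ?_⟩,
        smul_ne_zero c.ne_zero (h0 x)⟩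
      · exact (φX x).smul_mem _ (hm x).1
      · rw [h]
        exact (φY y).smul_mem _ (hm y).2
    subst hxy
    have : (c : F) = e := smul_left_injective F (h0 x) h
    rw [Units.ext this]
  have hc := Fintype.card_le_of_injective _ hinj
  have h1 : Fintype.card {w : Fin d → F // w ≠ 0} = q ^ d - 1 := by
    rw [Fintype.card_subtype_compl]
    simp [hq]
  rw [h1, Fintype.card_prod, Fintype.card_units, ← hq] at hc
  have hb : Fintype.card (Fin n → Bool) = 2 ^ n := by simp
  rw [hb] at hc
  have hq1 : 1 < q := hq ▸ Fintype.one_lt_card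
  refine ⟨(Nat.le_div_iff_mul_le (by omega)).2 hc, ?_⟩
  intro h2
  subst h2
  have hp : 0 < 2 ^ d := by positivity
  have : 2 ^ n < 2 ^ d := by omega
  exact (Nat.pow_lt_pow_iff_right (by norm_num)).1 this
end

section
/- Let n ≥ 1 and let G be the disjointness graph: the bipartite graph with both vertex sets equal to {0,1}^n and an edge (x,y) if and only if x_i ∧ y_i = 0 for every i ∈ [n]. If G has a projective realization of dimension d with intersection dimension 1 over a finite field F with q elements, then 2^n ≤ (q^d − 1)/(q − 1). -/
theorem disj_count {F : Type} [Field F] {d : ℕ}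
    [Fintype (Projectivization F (Fin d → F))] (W : Submodule F (Fin d → F))
    [DecidablePred (fun v => v ∈ W)]
    (hW : Module.finrank F W ≤ 1) (P : Prop) [Decidable P] (hP : P ↔ W ≠ ⊥) :
    ∑ p : Projectivization F (Fin d → F), (if p.rep ∈ W then (1 : ℚ) else 0)
      = if P then 1 else 0 := by
  classical
  by_cases h : P
  · rw [if_pos h]
    obtain ⟨v, hv, hv0⟩ := W.ne_bot_iff.1 (hP.1 h)
    have hone : ∀ w ∈ W, ∃ a : F, a • v = w := by
      intro w hw
      have h1 : Module.finrank F W = 1 := by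
        have : Module.finrank F W ≠ 0 := by
          rw [Ne, Submodule.finrank_eq_zero]
          exact hP.1 h
        omega
      obtain ⟨a, ha⟩ := (finrank_eq_one_iff_of_nonzero' (⟨v, hv⟩ : W)
        (by simpa [Subtype.ext_iff] using hv0)).1 h1 ⟨w, hw⟩
      exact ⟨a, congrArg Subtype.val ha⟩
    rw [Finset.sum_eq_single (Projectivization.mk F v hv0)]
    · rw [if_pos]
      obtain ⟨a, ha⟩ := Projectivization.exists_smul_eq_mk_rep F v hv0
      rw [← ha]
      exact W.smul_mem (a : F) hv
    · intro p _ hp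
      rw [if_neg]
      intro hpW
      apply hp
      obtain ⟨a, ha⟩ := hone _ hpW
      rw [← p.mk_rep, Projectivization.mk_eq_mk_iff']
      exact ⟨a, ha⟩
    · simp
  · rw [if_neg h]
    have hb : W = ⊥ := by
      by_contra hb
      exact h (hP.2 hb)
    refine Finset.sum_eq_zero fun p _ => ?_
    rw [if_neg]
    intro hp
    rw [hb] at hp
    exact p.rep_nonzero (by simpa using hp)

/-- Lower bound for projective realizations with intersection dimension `1` of the
disjointness graph on `{0,1}^n`: any such realization of dimension `d` over a finite
field with `q` elements satisfies `2^n ≤ (q^d − 1)/(q − 1)`. -/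
theorem stmt_7 (n : ℕ) (hn : 1 ≤ n) (F : Type) [Field F] [Fintype F]
    (q : ℕ) (hq : q = Fintype.card F)
    (d : ℕ) (φX φY : (Fin n → Bool) → Submodule F (Fin d → F))
    (hreal : ∀ x y : Fin n → Bool, (∀ i, (x i && y i) = false) ↔ φX x ⊓ φY y ≠ ⊥)
    (hint : ∀ x y : Fin n → Bool, Module.finrank F ↥(φX x ⊓ φY y) ≤ 1) :
    2 ^ n ≤ (q ^ d - 1) / (q - 1) := by
  classical
  have hcard : Nat.card (Projectivization F (Fin d → F)) = (q ^ d - 1) / (q - 1) := by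
    rw [Projectivization.card'']
    simp [hq]
  haveI : Finite (Projectivization F (Fin d → F)) := inferInstance
  letI : Fintype (Projectivization F (Fin d → F)) := Fintype.ofFinite _
  rw [← hcard, Nat.card_eq_fintype_card]
  let T : ((Fin n → Bool) → ℚ) →ₗ[ℚ] (Projectivization F (Fin d → F) → ℚ) :=
    { toFun := fun c p => ∑ x, c x * (if p.rep ∈ φX x then 1 else 0)
      map_add' := by
        intro a b
        funext p
        simp only [Pi.add_apply, add_mul, Finset.sum_add_distrib]
      map_smul' := by
        intro r a
        funext p
        simp only [Pi.smul_apply, smul_eq_mul, Finset.mul_sum, mul_assoc, RingHom.id_apply] }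
  have hT : Function.Injective T := by
    rw [← LinearMap.ker_eq_bot, LinearMap.ker_eq_bot']
    intro c hc
    have h1 : ∀ y : Fin n → Bool,
        ∑ x, c x * (if (∀ i, (x i && y i) = false) then 1 else 0) = 0 := by
      intro y
      have h2 : ∑ p, T c p * (if p.rep ∈ φY y then 1 else 0) = 0 := by simp [hc]
      refine Eq.trans ?_ h2
      change _ = ∑ p : Projectivization F (Fin d → F),
        (∑ x, c x * (if p.rep ∈ φX x then 1 else 0)) * (if p.rep ∈ φY y then 1 else 0)
      simp only [Finset.sum_mul]
      rw [Finset.sum_comm]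
      refine Finset.sum_congr rfl fun x _ => ?_
      rw [← disj_count (φX x ⊓ φY y) (hint x y) _ (hreal x y), Finset.mul_sum]
      refine Finset.sum_congr rfl fun p _ => ?_
      simp only [Submodule.mem_inf]
      split_ifs <;> simp_all
    have h3 : ∀ z : Fin n → Bool, c z = 0 := by
      intro z
      induction z using WellFoundedLT.induction with
      | ind z ih =>
        have h4 := h1 (fun i => !(z i))
        rw [Finset.sum_eq_single z] at h4
        · simpa using h4
        · intro x _ hx
          split_ifs with h
          · have hle : x ≤ z := by
              intro i
              have := h i
              revert this
              cases x i <;> cases z i <;> simp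
            rw [ih x (lt_of_le_of_ne hle hx), zero_mul]
          · simp
        · simp
    exact funext h3
  have := LinearMap.finrank_le_finrank_of_injective hT
  simpa using this
end

section
/- Let F be a field, let U and V be vertex sets, and let G_1 = (U,V,E_1) and G_2 = (U,V,E_2) be bipartite graphs on these vertex sets admitting projective realizations over F of dimensions d_1 and d_2 respectively. Then the bipartite graph (U, V, E_1 ∩ E_2) admits a projective realization over F of dimension d_1 · d_2. In particular, for Boolean functions f_1, f_2 on {0,1}^n × {0,1}^n, pd_F(f_1 ∧ f_2) ≤ pd_F(f_1) · pd_F(f_2). -/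
/-- Matrices with all columns in `A` and all rows in `B`. -/
def tens (F : Type) [Field F] {d₁ d₂ : ℕ} (A : Submodule F (Fin d₁ → F))
    (B : Submodule F (Fin d₂ → F)) : Submodule F (Fin (d₁ * d₂) → F) where
  carrier := {M | (∀ j, (fun i => M (finProdFinEquiv (i, j))) ∈ A) ∧
    (∀ i, (fun j => M (finProdFinEquiv (i, j))) ∈ B)}
  add_mem' := fun ha hb => ⟨fun j => A.add_mem (ha.1 j) (hb.1 j),
    fun i => B.add_mem (ha.2 i) (hb.2 i)⟩
  zero_mem' := ⟨fun _ => A.zero_mem, fun _ => B.zero_mem⟩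
  smul_mem' := fun c _ ha => ⟨fun j => A.smul_mem c (ha.1 j), fun i => B.smul_mem c (ha.2 i)⟩

/-- AND lemma for projective dimension: if bipartite graphs `(U, V, E₁)` and
`(U, V, E₂)` have projective realizations over `F` of dimensions `d₁` and `d₂`,
then `(U, V, E₁ ∩ E₂)` has a projective realization over `F` of dimension
`d₁ · d₂`; in particular `pd_F(f₁ ∧ f₂) ≤ pd_F(f₁) · pd_F(f₂)`. -/
theorem stmt_9 (F : Type) [Field F] (U V : Type) (E₁ E₂ : U → V → Prop)
    (d₁ d₂ : ℕ)
    (φU₁ : U → Submodule F (Fin d₁ → F)) (φV₁ : V → Submodule F (Fin d₁ → F))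
    (φU₂ : U → Submodule F (Fin d₂ → F)) (φV₂ : V → Submodule F (Fin d₂ → F))
    (h₁ : IsProjRealization F E₁ d₁ φU₁ φV₁)
    (h₂ : IsProjRealization F E₂ d₂ φU₂ φV₂) :
    ∃ (φU : U → Submodule F (Fin (d₁ * d₂) → F))
      (φV : V → Submodule F (Fin (d₁ * d₂) → F)),
      IsProjRealization F (fun u v => E₁ u v ∧ E₂ u v) (d₁ * d₂) φU φV := by
  refine ⟨fun u => tens F (φU₁ u) (φU₂ u), fun v => tens F (φV₁ v) (φV₂ v), ?_⟩
  intro u v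
  show E₁ u v ∧ E₂ u v ↔ _
  rw [h₁ u v, h₂ u v]
  simp only [Submodule.ne_bot_iff]
  constructor
  · rintro ⟨⟨a, ⟨ha, ha'⟩, ha0⟩, ⟨b, ⟨hb, hb'⟩, hb0⟩⟩
    have key : ∀ (A : Submodule F (Fin d₁ → F)) (B : Submodule F (Fin d₂ → F)), a ∈ A → b ∈ B →
        (fun k => a (finProdFinEquiv.symm k).1 * b (finProdFinEquiv.symm k).2) ∈ tens F A B := by
      intro A B hA hB
      refine ⟨fun j => ?_, fun i => ?_⟩
      · have := A.smul_mem (b j) hA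
        convert this using 1
        funext i
        simp only [Equiv.symm_apply_apply, Pi.smul_apply, smul_eq_mul, mul_comm]
      · have := B.smul_mem (a i) hB
        convert this using 1
        funext j
        simp only [Equiv.symm_apply_apply, Pi.smul_apply, smul_eq_mul]
    refine ⟨_, ⟨key _ _ ha hb, key _ _ ha' hb'⟩, ?_⟩
    obtain ⟨i, hi⟩ := Function.ne_iff.mp ha0
    obtain ⟨j, hj⟩ := Function.ne_iff.mp hb0
    intro h
    have := congrFun h (finProdFinEquiv (i, j))
    simp only [Equiv.symm_apply_apply, Pi.zero_apply] at this
    exact mul_ne_zero hi hj this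
  · rintro ⟨M, ⟨hU, hV⟩, h0⟩
    obtain ⟨k, hk⟩ := Function.ne_iff.mp h0
    obtain ⟨⟨i, j⟩, rfl⟩ := finProdFinEquiv.surjective k
    exact ⟨⟨_, ⟨hU.1 j, hV.1 j⟩, fun h => hk (congrFun h i)⟩,
      ⟨_, ⟨hU.2 i, hV.2 i⟩, fun h => hk (congrFun h j)⟩⟩
end

section
/- Let F be a field, G = (U, V, E) a finite bipartite graph, and d ∈ ℕ. Then G has a standard projective realization of dimension d over F with intersection dimension 1 if and only if G has a biclique partition of size at most d. Consequently, the standard projective dimension with intersection dimension 1 of G equals its biclique partition number: uspd(G) = bp(G). -/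
/-- A standard projective realization of dimension `d` over `F` with intersection
dimension `1`: every assigned subspace is spanned by a subset of the standard basis
vectors of `F^d`, edges correspond to nontrivial intersections, and every pairwise
intersection has dimension at most `1`. -/
def HasStdRealizationIntOne (F : Type) [Field F] {U V : Type} (E : U → V → Prop)
    (d : ℕ) : Prop :=
  ∃ (φU : U → Submodule F (Fin d → F)) (φV : V → Submodule F (Fin d → F)),
    (∀ u, ∃ s : Set (Fin d),
        φU u = Submodule.span F ((fun i => Pi.single i (1 : F)) '' s)) ∧
    (∀ v, ∃ s : Set (Fin d),
        φV v = Submodule.span F ((fun i => Pi.single i (1 : F)) '' s)) ∧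
    (∀ u v, E u v ↔ φU u ⊓ φV v ≠ ⊥) ∧
    (∀ u v, Module.finrank F ↥(φU u ⊓ φV v) ≤ 1)

/-- A biclique partition of size at most `k`: bicliques `A t × B t` contained in `E`
whose union is `E`, with every edge belonging to exactly one biclique. -/
def HasBicliquePartition {U V : Type} (E : U → V → Prop) (k : ℕ) : Prop :=
  ∃ (A : Fin k → Set U) (B : Fin k → Set V),
    (∀ t u v, u ∈ A t → v ∈ B t → E u v) ∧
    (∀ u v, E u v → ∃! t, u ∈ A t ∧ v ∈ B t)

lemma std_mem (F : Type) [Field F] {d : ℕ} (s : Set (Fin d)) (x : Fin d → F) :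
    x ∈ Submodule.span F ((fun i => Pi.single i (1 : F)) '' s) ↔ ∀ i, x i ≠ 0 → i ∈ s := by
  have h := Module.Basis.mem_span_image (Pi.basisFun F (Fin d)) (m := x) (s := s)
  have e : (⇑(Pi.basisFun F (Fin d))) = fun i => Pi.single i (1 : F) := by
    ext i; simp
  rw [e] at h
  rw [h]
  simp [Set.subset_def]

lemma std_ne_bot (F : Type) [Field F] {d : ℕ} (s t : Set (Fin d)) :
    (Submodule.span F ((fun i => Pi.single i (1 : F)) '' s) ⊓
      Submodule.span F ((fun i => Pi.single i (1 : F)) '' t) ≠ ⊥) ↔ ∃ i, i ∈ s ∧ i ∈ t := by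
  rw [Submodule.ne_bot_iff]
  constructor
  · rintro ⟨x, hx, hx0⟩
    rw [Submodule.mem_inf, std_mem, std_mem] at hx
    obtain ⟨i, hi⟩ := Function.ne_iff.mp hx0
    exact ⟨i, hx.1 i hi, hx.2 i hi⟩
  · rintro ⟨i, hs, ht⟩
    exact ⟨Pi.single i 1, ⟨Submodule.subset_span ⟨i, hs, rfl⟩,
      Submodule.subset_span ⟨i, ht, rfl⟩⟩, by simp⟩

lemma std_finrank (F : Type) [Field F] {d : ℕ} (s t : Set (Fin d)) :
    Module.finrank F ↥(Submodule.span F ((fun i => Pi.single i (1 : F)) '' s) ⊓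
      Submodule.span F ((fun i => Pi.single i (1 : F)) '' t)) ≤ 1 ↔
      ∀ i j, i ∈ s → i ∈ t → j ∈ s → j ∈ t → i = j := by
  rw [finrank_le_one_iff]
  constructor
  · rintro ⟨v, hv⟩ i j his hit hjs hjt
    by_contra hij
    obtain ⟨a, ha⟩ := hv ⟨Pi.single i 1, ⟨Submodule.subset_span ⟨i, his, rfl⟩,
      Submodule.subset_span ⟨i, hit, rfl⟩⟩⟩
    obtain ⟨b, hb⟩ := hv ⟨Pi.single j 1, ⟨Submodule.subset_span ⟨j, hjs, rfl⟩,
      Submodule.subset_span ⟨j, hjt, rfl⟩⟩⟩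
    have ha' := congrArg Subtype.val ha
    have hb' := congrArg Subtype.val hb
    have h1 := congrFun ha' i
    have h2 := congrFun ha' j
    have h3 := congrFun hb' j
    simp [Pi.single_apply, Ne.symm hij] at h1 h2 h3
    rcases h2 with h2 | h2 <;> simp [h2] at h1 h3
  · intro h
    by_cases hne : ∃ i, i ∈ s ∧ i ∈ t
    · obtain ⟨i, hs, ht⟩ := hne
      refine ⟨⟨Pi.single i 1, ⟨Submodule.subset_span ⟨i, hs, rfl⟩,
        Submodule.subset_span ⟨i, ht, rfl⟩⟩⟩, ?_⟩
      rintro ⟨x, hx⟩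
      refine ⟨x i, Subtype.ext ?_⟩
      rw [Submodule.mem_inf, std_mem, std_mem] at hx
      ext j
      by_cases hj : x j = 0
      · by_cases hij : j = i
        · subst hij; simp
        · simp [Pi.single_apply, hij, hj]
      · have := h i j hs ht (hx.1 j hj) (hx.2 j hj)
        subst this; simp
    · refine ⟨0, ?_⟩
      rintro ⟨x, hx⟩
      refine ⟨0, Subtype.ext ?_⟩
      by_contra hx0
      refine hne ((std_ne_bot F s t).mp ((Submodule.ne_bot_iff _).mpr ⟨x, hx, ?_⟩))
      intro h0; exact hx0 (by simp [h0])

lemma std_iff (F : Type) [Field F] (U V : Type) (E : U → V → Prop) (d : ℕ) :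
    HasStdRealizationIntOne F E d ↔ HasBicliquePartition E d := by
  constructor
  · rintro ⟨φU, φV, hU, hV, hE, h1⟩
    choose S hS using hU
    choose T hT using hV
    simp only [hS, hT, std_ne_bot] at hE
    replace h1 := fun u v => (std_finrank F (S u) (T v)).mp (by rw [← hS, ← hT]; exact h1 u v)
    refine ⟨fun t => {u | t ∈ S u}, fun t => {v | t ∈ T v}, ?_, ?_⟩
    · intro t u v hu hv
      exact (hE u v).mpr ⟨t, hu, hv⟩
    · intro u v h
      obtain ⟨t, h⟩ := (hE u v).mp h
      exact ⟨t, h, fun y hy => h1 u v y t hy.1 hy.2 h.1 h.2⟩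
  · rintro ⟨A, B, hAB, hE⟩
    refine ⟨fun u => Submodule.span F ((fun i => Pi.single i (1 : F)) '' {t | u ∈ A t}),
      fun v => Submodule.span F ((fun i => Pi.single i (1 : F)) '' {t | v ∈ B t}),
      fun u => ⟨_, rfl⟩, fun v => ⟨_, rfl⟩, ?_, ?_⟩
    · intro u v
      rw [std_ne_bot]
      exact ⟨fun h => (hE u v h).exists, fun ⟨t, h, h'⟩ => hAB t u v h h'⟩
    · intro u v
      rw [std_finrank]
      intro i j hi hi' hj hj'
      exact (hE u v (hAB i u v hi hi')).unique ⟨hi, hi'⟩ ⟨hj, hj'⟩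

/-- A finite bipartite graph has a standard projective realization of dimension `d`
over `F` with intersection dimension `1` iff it has a biclique partition of size at
most `d`; consequently `uspd(G) = bp(G)`. -/
theorem stmt_15 (F : Type) [Field F] (U V : Type) [Fintype U] [Fintype V]
    (E : U → V → Prop) (d : ℕ) :
    (HasStdRealizationIntOne F E d ↔ HasBicliquePartition E d) ∧
      sInf {k : ℕ | HasStdRealizationIntOne F E k} =
        sInf {k : ℕ | HasBicliquePartition E k} := by
  exact ⟨std_iff F U V E d, by simp only [std_iff]⟩
end

section
/- There exists an absolute constant γ > 0 with the following property. Let n, m ≥ 1, let f : {0,1}^n × {0,1}^n → {0,1} be a Boolean function, and let T_1,…,T_m be pairwise disjoint subsets of [n]. For each i, let c_i(f) be the number of distinct functions g : {0,1}^{T_i} → {0,1} that arise as restrictions of f obtained by fixing all x-variables outside T_i and all y-variables to constants, and assume c_i(f) ≥ 16 for every i. Then every bitwise decomposable projective assignment for f of dimension D over F_2 satisfies D ≥ γ · Σ_{i=1}^m (log c_i(f)) / (log log c_i(f)). -/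
/-- A subspace of `F_2^D` spanned by a subset of the vectors `e_k − e_l` (`k ≠ l`),
where `e_1, …, e_D` is the standard basis. -/
def IsDiffSpanned {D : ℕ} (W : Submodule (ZMod 2) (Fin D → ZMod 2)) : Prop :=
  ∃ S : Set (Fin D → ZMod 2),
    (∀ w ∈ S, ∃ k l : Fin D, k ≠ l ∧
        w = Pi.single k (1 : ZMod 2) - Pi.single l (1 : ZMod 2)) ∧
    W = Submodule.span (ZMod 2) S

/-- A bitwise decomposable projective assignment of dimension `D` over `F_2` for a
Boolean function `f : {0,1}^n × {0,1}^n → {0,1}`: subspaces `U i a`, `V j b` of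
`F_2^D`, each spanned by difference vectors of standard basis vectors, such that
`φ(x) = span(∪ᵢ U i xᵢ)` and `φ(y) = span(∪ⱼ V j yⱼ)` realize `f`, and spans of
disjoint sub-collections (on each side) intersect trivially. -/
def IsBitDecompAssignment {n : ℕ}
    (f : (Fin n → Bool) → (Fin n → Bool) → Bool) (D : ℕ)
    (U V : Fin n → Bool → Submodule (ZMod 2) (Fin D → ZMod 2)) : Prop :=
  (∀ i a, IsDiffSpanned (U i a)) ∧
  (∀ j b, IsDiffSpanned (V j b)) ∧
  (∀ x y : Fin n → Bool,
      f x y = true ↔ (⨆ i, U i (x i)) ⊓ (⨆ j, V j (y j)) ≠ ⊥) ∧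
  (∀ S₁ S₂ : Set (Fin n × Bool), Disjoint S₁ S₂ →
      (⨆ p ∈ S₁, U p.1 p.2) ⊓ (⨆ p ∈ S₂, U p.1 p.2) = ⊥) ∧
  (∀ S₁ S₂ : Set (Fin n × Bool), Disjoint S₁ S₂ →
      (⨆ p ∈ S₁, V p.1 p.2) ⊓ (⨆ p ∈ S₂, V p.1 p.2) = ⊥)


lemma isDiff_iSup {D : ℕ} {ι : Sort*} (W : ι → Submodule (ZMod 2) (Fin D → ZMod 2))
    (h : ∀ i, IsDiffSpanned (W i)) : IsDiffSpanned (⨆ i, W i) := by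
  choose S hS hW using h
  refine ⟨⋃ i, S i, ?_, ?_⟩
  · intro w hw
    obtain ⟨i, hi⟩ := Set.mem_iUnion.1 hw
    exact hS i w hi
  · rw [Submodule.span_iUnion]
    exact iSup_congr hW

lemma isDiff_sup {D : ℕ} {A B : Submodule (ZMod 2) (Fin D → ZMod 2)}
    (hA : IsDiffSpanned A) (hB : IsDiffSpanned B) : IsDiffSpanned (A ⊔ B) := by
  obtain ⟨S, hS, rfl⟩ := hA
  obtain ⟨S', hS', rfl⟩ := hB
  refine ⟨S ∪ S', ?_, (Submodule.span_union _ _).symm⟩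
  rintro w (hw | hw)
  · exact hS w hw
  · exact hS' w hw

lemma isDiff_support {D : ℕ} {W : Submodule (ZMod 2) (Fin D → ZMod 2)}
    (hW : IsDiffSpanned W) : ∃ S : Finset (Fin D), S.card ≤ 2 * Module.finrank (ZMod 2) W ∧
      ∀ v ∈ W, ∀ k, k ∉ S → v k = 0 := by
  classical
  obtain ⟨E, hE, rfl⟩ := hW
  obtain ⟨B, hBE, hspan, hli⟩ := exists_linearIndependent (ZMod 2) E
  have hfin : B.Finite := Set.toFinite B
  have : Fintype B := hfin.fintype
  rw [← hspan, finrank_span_set_eq_card hli]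
  have hE2 : ∀ w, ∃ P : Finset (Fin D), P.card ≤ 2 ∧ (w ∈ E → ∀ j, j ∉ P → w j = 0) := by
    intro w
    by_cases hwE : w ∈ E
    · obtain ⟨k, l, -, rfl⟩ := hE w hwE
      refine ⟨{k, l}, Finset.card_le_two, fun _ j hj => ?_⟩
      simp only [Finset.mem_insert, Finset.mem_singleton, not_or] at hj
      simp [Pi.single_apply, hj.1, hj.2]
    · exact ⟨∅, by simp, fun h => absurd h hwE⟩
  choose P hP2 hP using hE2
  refine ⟨B.toFinset.biUnion P, ?_, ?_⟩
  · refine (Finset.card_biUnion_le_card_mul _ _ 2 ?_).trans (by rw [mul_comm])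
    exact fun b _ => hP2 b
  · intro v hv j hj
    induction hv using Submodule.span_induction with
    | mem x hx =>
      simp only [Finset.mem_biUnion, not_exists, not_and, Set.mem_toFinset] at hj
      exact hP x (hBE hx) j (hj x hx)
    | zero => rfl
    | add x y _ _ hx hy => simp [hx, hy]
    | smul a x _ hx => simp [hx]

/-- connectivity relation of a subspace -/
def conn {D : ℕ} (N : Submodule (ZMod 2) (Fin D → ZMod 2)) : Setoid (Fin D) where
  r k l := (Pi.single k 1 - Pi.single l 1 : Fin D → ZMod 2) ∈ N
  iseqv := ⟨fun k => by simp, fun {k l} h => by simpa using N.neg_mem h,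
    fun {k l m} h h' => by simpa using N.add_mem h h'⟩

open Classical in
lemma mem_iff_conn {D : ℕ} {N : Submodule (ZMod 2) (Fin D → ZMod 2)} (hN : IsDiffSpanned N)
    (v : Fin D → ZMod 2) : v ∈ N ↔ ∀ s, ∑ k, (if (conn N).r k s then v k else 0) = 0 := by
  constructor
  · intro hv s
    obtain ⟨E, hE, hNE⟩ := hN
    have hv' := hv
    rw [hNE] at hv'
    clear hv
    induction hv' using Submodule.span_induction with
    | mem x hx =>
      obtain ⟨k, l, hkl, rfl⟩ := hE x hx
      have hr : (conn N).r k l := by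
        change _ ∈ N
        rw [hNE]; exact Submodule.subset_span hx
      have hiff : (conn N).r k s ↔ (conn N).r l s :=
        ⟨fun h => (conn N).trans' ((conn N).symm' hr) h, fun h => (conn N).trans' hr h⟩
      have : ∀ j, (if (conn N).r j s then (Pi.single k 1 - Pi.single l 1 : Fin D → ZMod 2) j else 0)
          = (if j = k then (if (conn N).r k s then 1 else 0) else 0)
            - (if j = l then (if (conn N).r l s then 1 else 0) else 0) := by
        intro j
        simp only [Pi.sub_apply, Pi.single_apply]
        split_ifs <;> simp_all
      rw [Finset.sum_congr rfl (fun j _ => this j), Finset.sum_sub_distrib]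
      simp [hiff]
    | zero => simp
    | add x y _ _ hx hy =>
      have h0 := congrArg₂ (· + ·) hx hy
      simp only [← Finset.sum_add_distrib, add_zero] at h0
      refine Eq.trans ?_ h0
      refine Finset.sum_congr rfl fun j _ => ?_
      split_ifs <;> simp
    | smul a x _ hx =>
      have h0 := congrArg (a * ·) hx
      simp only [Finset.mul_sum, mul_zero] at h0
      refine Eq.trans ?_ h0
      refine Finset.sum_congr rfl fun j _ => ?_
      split_ifs <;> simp
  · intro h
    let r : Fin D → Fin D := fun k => (Quotient.mk (conn N) k).out
    have hr : ∀ k, (conn N).r k (r k) := fun k => (conn N).symm' (Quotient.mk_out (s := conn N) k)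
    have hrr : ∀ k l, (conn N).r k l → r k = r l := fun k l hkl => by
      have : Quotient.mk (conn N) k = Quotient.mk (conn N) l := Quotient.sound hkl
      simp only [r, this]
    have h1 : v = ∑ k, v k • (Pi.single k 1 - Pi.single (r k) 1 : Fin D → ZMod 2)
        + ∑ k, v k • (Pi.single (r k) 1 : Fin D → ZMod 2) := by
      rw [← Finset.sum_add_distrib]
      simp only [← smul_add, sub_add_cancel]
      ext j
      simp [Finset.sum_apply, Pi.single_apply]
    have h2 : ∑ k, v k • (Pi.single (r k) 1 : Fin D → ZMod 2) = 0 := by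
      ext j
      simp only [Finset.sum_apply, Pi.smul_apply, Pi.single_apply, smul_eq_mul, mul_ite, mul_one,
        mul_zero, Pi.zero_apply]
      by_cases hj : r j = j
      · refine Eq.trans ?_ (h j)
        refine Finset.sum_congr rfl fun k _ => ?_
        have : j = r k ↔ (conn N).r k j :=
          ⟨fun e => by have := hr k; rwa [← e] at this, fun e => by rw [hrr k j e, hj]⟩
        simp only [this]
      · refine Finset.sum_eq_zero fun k _ => ?_
        rw [if_neg]
        rintro rfl
        exact hj (hrr _ _ (hr k)).symm
    rw [h1, h2, add_zero]
    exact N.sum_mem fun k _ => N.smul_mem _ (hr k)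

lemma mem_iff_of_comap {D : ℕ} {N N' : Submodule (ZMod 2) (Fin D → ZMod 2)}
    (hN : IsDiffSpanned N) (hN' : IsDiffSpanned N') (S : Finset (Fin D))
    (h : (conn N).comap (Subtype.val : S → Fin D) = (conn N').comap Subtype.val)
    (v : Fin D → ZMod 2) (hv : ∀ k, k ∉ S → v k = 0) (hvN : v ∈ N) : v ∈ N' := by
  classical
  have hrel : ∀ k ∈ S, ∀ l ∈ S, ((conn N).r k l ↔ (conn N').r k l) := by
    intro k hk l hl
    have := congrArg (fun s : Setoid S => s.r ⟨k, hk⟩ ⟨l, hl⟩) h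
    exact iff_of_eq this
  rw [mem_iff_conn hN] at hvN
  rw [mem_iff_conn hN']
  intro s
  by_cases hs : ∃ t ∈ S, (conn N').r t s
  · obtain ⟨t, ht, hts⟩ := hs
    refine Eq.trans ?_ (hvN t)
    refine Finset.sum_congr rfl fun k _ => ?_
    by_cases hk : k ∈ S
    · have : (conn N').r k s ↔ (conn N).r k t := by
        rw [hrel k hk t ht]
        exact ⟨fun e => (conn N').trans' e ((conn N').symm' hts), fun e => (conn N').trans' e hts⟩
      simp only [this]
    · simp [hv k hk]
  · refine Finset.sum_eq_zero fun k _ => ?_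
    by_cases hk : k ∈ S
    · rw [if_neg fun e => hs ⟨k, hk, e⟩]
    · simp [hv k hk]

lemma card_setoid_le (α : Type) [Fintype α] :
    Nat.card (Setoid α) ≤ Fintype.card α ^ Fintype.card α := by
  classical
  have : Function.Injective
      (fun (s : Setoid α) (a : α) => (Quotient.mk s a).out) := by
    intro s t h
    ext a b
    have h1 : ∀ (s : Setoid α) a b, s a b ↔ (Quotient.mk s a).out = (Quotient.mk s b).out := by
      intro s a b
      rw [Quotient.out_inj]
      exact (Quotient.eq (r := s)).symm
    have h2 := congrFun h a
    have h3 := congrFun h b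
    simp only at h2 h3
    rw [h1 s, h1 t, h2, h3]
  have := Nat.card_le_card_of_injective _ this
  rw [Nat.card_fun, Nat.card_eq_fintype_card (α := α)] at this
  exact this

lemma block_count {n D : ℕ} {f : (Fin n → Bool) → (Fin n → Bool) → Bool}
    {U V : Fin n → Bool → Submodule (ZMod 2) (Fin D → ZMod 2)}
    (h : IsBitDecompAssignment f D U V) (T : Finset (Fin n)) (d : ℕ)
    (hd : d = Module.finrank (ZMod 2) (⨆ p ∈ {p : Fin n × Bool | p.1 ∈ T}, U p.1 p.2 :
      Submodule (ZMod 2) (Fin D → ZMod 2))) :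
    Set.ncard {g : (Fin n → Bool) → Bool |
          ∃ ρ w : Fin n → Bool,
            g = fun a => f (fun j => if j ∈ T then a j else ρ j) w} ≤ (2 * d) ^ (2 * d) + 1 := by
  classical
  obtain ⟨hU, hV, hf, hUd, -⟩ := h
  set W : Submodule (ZMod 2) (Fin D → ZMod 2) :=
    ⨆ p ∈ {p : Fin n × Bool | p.1 ∈ T}, U p.1 p.2 with hWdef
  have hW : IsDiffSpanned W := isDiff_iSup _ fun p => isDiff_iSup _ fun _ => hU _ _
  obtain ⟨S, hScard, hS⟩ := isDiff_support hW
  let A : (Fin n → Bool) → Submodule (ZMod 2) (Fin D → ZMod 2) := fun a => ⨆ j, ⨆ _ : j ∈ T, U j (a j)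
  let R : (Fin n → Bool) → Submodule (ZMod 2) (Fin D → ZMod 2) := fun a => ⨆ j, ⨆ _ : j ∉ T, U j (a j)
  let Y : (Fin n → Bool) → Submodule (ZMod 2) (Fin D → ZMod 2) := fun w => ⨆ j, V j (w j)
  have hAW : ∀ a, A a ≤ W := fun a => iSup₂_le fun j hj =>
    le_iSup₂_of_le (f := fun (p : Fin n × Bool) (_ : p ∈ {p : Fin n × Bool | p.1 ∈ T}) => U p.1 p.2)
      (j, a j) hj le_rfl
  have hAR : ∀ a ρ, Disjoint (A a) (R ρ) := by
    intro a ρ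
    have hd := hUd {p | p.1 ∈ T} {p | p.1 ∉ T}
      (Set.disjoint_left.2 fun p hp hp' => hp' hp)
    refine (disjoint_iff.2 hd).mono (hAW a) ?_
    exact iSup₂_le fun j hj =>
      le_iSup₂_of_le (f := fun (p : Fin n × Bool) (_ : p ∈ {p : Fin n × Bool | p.1 ∉ T}) => U p.1 p.2)
        (j, ρ j) hj le_rfl
  have hsplit : ∀ a ρ : Fin n → Bool,
      (⨆ i, U i (if i ∈ T then a i else ρ i)) = A a ⊔ R ρ := by
    intro a ρ
    simp only [A, R]
    rw [← iSup_sup_eq]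
    refine iSup_congr fun i => ?_
    by_cases hi : i ∈ T <;> simp [hi]
  have hN : ∀ ρ w, IsDiffSpanned (R ρ ⊔ Y w) := fun ρ w =>
    isDiff_sup (isDiff_iSup _ fun _ => isDiff_iSup _ fun _ => hU _ _) (isDiff_iSup _ fun _ => hV _ _)
  have hval : ∀ a ρ w, (f (fun j => if j ∈ T then a j else ρ j) w = true ↔
      ¬ Disjoint (A a ⊔ R ρ) (Y w)) := by
    intro a ρ w
    rw [hf, hsplit, disjoint_iff]
  let F : (Fin n → Bool) × (Fin n → Bool) → ((Fin n → Bool) → Bool) :=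
    fun q a => f (fun j => if j ∈ T then a j else q.1 j) q.2
  let code : (Fin n → Bool) × (Fin n → Bool) → Option (Setoid S) := fun q =>
    if Disjoint (R q.1) (Y q.2) then some ((conn (R q.1 ⊔ Y q.2)).comap Subtype.val) else none
  have key : ∀ q q', code q = code q' → ∀ a, F q a = true → F q' a = true := by
    intro q q' hqq a hFa
    simp only [F] at hFa ⊢
    rw [hval] at hFa ⊢
    by_cases h1 : Disjoint (R q.1) (Y q.2)
    · by_cases h2 : Disjoint (R q'.1) (Y q'.2)
      · simp only [code, if_pos h1, if_pos h2, Option.some.injEq] at hqq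
        intro hdis
        apply hFa
        have h3 : Disjoint (A a) (R q'.1 ⊔ Y q'.2) :=
          (hAR a q'.1).disjoint_sup_right_of_disjoint_sup_left hdis
        refine Disjoint.disjoint_sup_left_of_disjoint_sup_right h1 ?_
        rw [Submodule.disjoint_def] at h3 ⊢
        intro v hvA hvN
        exact h3 v hvA (mem_iff_of_comap (hN _ _) (hN _ _) S hqq v (hS v (hAW a hvA)) hvN)
      · simp [code, h1, h2] at hqq
    · by_cases h2 : Disjoint (R q'.1) (Y q'.2)
      · simp [code, h1, h2] at hqq
      · exact fun hd => h2 (hd.mono_left le_sup_right)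
  have hfac : Function.FactorsThrough F code := by
    intro q q' hqq
    funext a
    exact Bool.eq_iff_iff.2 ⟨key q q' hqq a, key q' q hqq.symm a⟩
  have hset : {g : (Fin n → Bool) → Bool | ∃ ρ w : Fin n → Bool,
      g = fun a => f (fun j => if j ∈ T then a j else ρ j) w}
      ⊆ Set.range (Function.extend code F (fun _ _ => true)) := by
    rintro g ⟨ρ, w, rfl⟩
    exact ⟨code (ρ, w), hfac.extend_apply _ _⟩
  have : Finite (Setoid S) := Finite.of_injective (fun s : Setoid S => s.r) (by
    intro s t h
    ext a b
    exact iff_of_eq (congrFun (congrFun h a) b))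
  have hrange : (Set.range (Function.extend code F (fun _ _ => true))).ncard
      ≤ Nat.card (Option (Setoid S)) := by
    rw [← Set.image_univ, ← Set.ncard_univ]
    exact Set.ncard_image_le
  refine (Set.ncard_le_ncard hset (Set.toFinite _)).trans (hrange.trans ?_)
  rw [Finite.card_option]
  have h1 := card_setoid_le S
  rw [Fintype.card_coe] at h1
  have h2 : S.card ≤ 2 * d := by rw [hd]; exact hScard
  have h3 : S.card ^ S.card ≤ (2 * d) ^ (2 * d) := by
    rcases Nat.eq_zero_or_pos d with h0 | h0
    · have : S.card = 0 := by omega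
      simp [this, h0]
    · exact (Nat.pow_le_pow_left h2 _).trans (Nat.pow_le_pow_right (by omega) h2)
  omega

lemma numeric (c d : ℕ) (hc : 16 ≤ c) (h : c ≤ (2 * d) ^ (2 * d) + 1) :
    (1 / 5 : ℝ) * (Real.logb 2 c / Real.logb 2 (Real.logb 2 c)) ≤ d := by
  have hd : 1 ≤ d := by
    by_contra hd
    have : d = 0 := by omega
    subst this
    simp at h
    omega
  have h2 : c ≤ (2 * d) ^ (3 * d) := by
    have e : (2 * d) ^ (3 * d) = (2 * d) ^ (2 * d) * (2 * d) ^ d := by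
      rw [← pow_add]; congr 1; ring
    have h3 : 2 ≤ (2 * d) ^ d := by
      calc 2 ≤ 2 * d := by omega
        _ = (2 * d) ^ 1 := (pow_one _).symm
        _ ≤ (2 * d) ^ d := Nat.pow_le_pow_right (by omega) hd
    have h4 : 1 ≤ (2 * d) ^ (2 * d) := Nat.one_le_pow _ _ (by omega)
    rw [e]; nlinarith
  have hcR : (16 : ℝ) ≤ c := by exact_mod_cast hc
  have hdR : (1 : ℝ) ≤ d := by exact_mod_cast hd
  set L := Real.logb 2 c with hL
  have hL4 : 4 ≤ L := by
    rw [hL, Real.le_logb_iff_rpow_le (by norm_num) (by linarith)]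
    norm_num; exact hc
  have hLL : 2 ≤ Real.logb 2 L := by
    rw [Real.le_logb_iff_rpow_le (by norm_num) (by linarith)]
    norm_num; exact hL4
  have hup : L ≤ 3 * d * Real.logb 2 (2 * d) := by
    have : Real.logb 2 (c : ℝ) ≤ Real.logb 2 ((2 * d : ℝ) ^ (3 * d)) :=
      Real.logb_le_logb_of_le (by norm_num) (by linarith) (by exact_mod_cast h2)
    rw [Real.logb_pow] at this
    push_cast at this
    exact this
  have hl2 : Real.logb 2 (2 * d : ℝ) = 1 + Real.logb 2 d := by
    rw [Real.logb_mul (by norm_num) (by positivity), Real.logb_self_eq_one (by norm_num)]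
  suffices L / Real.logb 2 L ≤ 5 * d by linarith
  rw [div_le_iff₀ (by linarith)]
  by_cases hdL : L ≤ d
  · nlinarith
  · have : Real.logb 2 (d : ℝ) ≤ Real.logb 2 L :=
      Real.logb_le_logb_of_le (by norm_num) (by linarith) (by linarith)
    rw [hl2] at hup
    nlinarith

/-- Nechiporuk-style lower bound for bitwise decomposable projective dimension:
there is an absolute constant `γ > 0` such that for any `f` and pairwise disjoint
blocks `T₁, …, T_m` of `x`-variables with `cᵢ(f)` distinct restricted subfunctions
on `Tᵢ` (all `cᵢ(f) ≥ 16`), every bitwise decomposable projective assignment for `f`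
of dimension `D` satisfies `D ≥ γ · Σᵢ log cᵢ(f) / log log cᵢ(f)` (logs base 2). -/
theorem stmt_17 : ∃ γ : ℝ, 0 < γ ∧
    ∀ (n m : ℕ), 1 ≤ n → 1 ≤ m →
    ∀ (f : (Fin n → Bool) → (Fin n → Bool) → Bool) (T : Fin m → Finset (Fin n)),
      (∀ i j : Fin m, i ≠ j → Disjoint (T i) (T j)) →
    ∀ c : Fin m → ℕ,
      (∀ i, c i = Set.ncard {g : (Fin n → Bool) → Bool |
          ∃ ρ w : Fin n → Bool,
            g = fun a => f (fun j => if j ∈ T i then a j else ρ j) w}) →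
      (∀ i, 16 ≤ c i) →
    ∀ (D : ℕ) (U V : Fin n → Bool → Submodule (ZMod 2) (Fin D → ZMod 2)),
      IsBitDecompAssignment f D U V →
      γ * ∑ i : Fin m, Real.logb 2 (c i) / Real.logb 2 (Real.logb 2 (c i)) ≤ D := by
  refine ⟨1 / 5, by norm_num, ?_⟩
  intro n m _ _ f T hT c hc hc16 D U V h
  let W : Fin m → Submodule (ZMod 2) (Fin D → ZMod 2) := fun i =>
    ⨆ p ∈ {p : Fin n × Bool | p.1 ∈ T i}, U p.1 p.2
  have hind : iSupIndep W := by
    intro i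
    have hd := h.2.2.2.1 {p | p.1 ∈ T i} {p | ∃ j, j ≠ i ∧ p.1 ∈ T j}
      (Set.disjoint_left.2 fun p hp ⟨j, hj, hp'⟩ =>
        Finset.disjoint_left.1 (hT j i hj) hp' hp)
    refine (disjoint_iff.2 hd).mono_right ?_
    refine iSup₂_le fun j hj => iSup₂_le fun p hp => ?_
    exact le_iSup₂_of_le
      (f := fun (p : Fin n × Bool) (_ : p ∈ {p : Fin n × Bool | ∃ j, j ≠ i ∧ p.1 ∈ T j}) => U p.1 p.2)
      p ⟨j, hj, hp⟩ le_rfl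
  have hsum : ∑ i, Module.finrank (ZMod 2) (W i) ≤ D := by
    have hinj := hind.dfinsupp_lsum_injective
    have := LinearMap.finrank_le_finrank_of_injective hinj
    rw [Module.finrank_fin_fun] at this
    refine le_trans (le_of_eq ?_) this
    exact (Module.finrank_directSum (R := ZMod 2) (M := fun i => W i)).symm
  rw [Finset.mul_sum]
  calc _ ≤ ∑ i, (Module.finrank (ZMod 2) (W i) : ℝ) := by
        refine Finset.sum_le_sum fun i _ => numeric _ _ (hc16 i) ?_
        rw [hc i]
        exact block_count h (T i) _ rfl
    _ ≤ D := by exact_mod_cast hsum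
end

section
/- Let F be a finite field with q ≥ 2 elements and let 0 ≤ k ≤ n. Then the number N_k of k-dimensional F-linear subspaces of F^n satisfies q^{k(n−k)} ≤ N_k < c_q · q^{k(n−k)}, where c_q = ∏_{j=1}^{∞} (1 − q^{−j})^{−1} (an absolutely convergent infinite product, which for all q ≥ 2 satisfies c_q ≤ c_2 < 3.463). -/
/-- The constant `c_q = ∏_{j=1}^∞ (1 − q^{−j})⁻¹`. -/
noncomputable def cq (q : ℕ) : ℝ :=
  ∏' j : ℕ, (1 - ((q : ℝ))⁻¹ ^ (j + 1))⁻¹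

lemma aux_mult (q : ℕ) (hq : 2 ≤ q) :
    Multipliable (fun j : ℕ => (1 - ((q : ℝ))⁻¹ ^ (j + 1))⁻¹) := by
  have hq' : (2:ℝ) ≤ q := by exact_mod_cast hq
  have h0 : (0:ℝ) < (q:ℝ)⁻¹ := by positivity
  have h2 : (q:ℝ)⁻¹ ≤ 1/2 := by
    rw [inv_le_comm₀ (by positivity) (by norm_num)]; norm_num; exact hq
  have hs : Summable (fun j : ℕ => (1 - ((q : ℝ))⁻¹ ^ (j + 1))⁻¹ - 1) := by
    refine Summable.of_nonneg_of_le (f := fun j : ℕ => ((q:ℝ)⁻¹) ^ j) ?_ ?_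
      (summable_geometric_of_lt_one h0.le (by linarith))
    · intro j
      have h3 : ((q:ℝ)⁻¹) ^ (j+1) ≤ 1/2 :=
        (pow_le_of_le_one h0.le (by linarith) (by omega)).trans h2
      have h4 : 0 < ((q:ℝ)⁻¹) ^ (j+1) := by positivity
      have : 1 ≤ (1 - ((q : ℝ))⁻¹ ^ (j + 1))⁻¹ := (one_le_inv₀ (by linarith)).2 (by linarith)
      linarith
    · intro j
      have h3 : ((q:ℝ)⁻¹) ^ (j+1) ≤ 1/2 :=
        (pow_le_of_le_one h0.le (by linarith) (by omega)).trans h2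
      have h4 : 0 < ((q:ℝ)⁻¹) ^ j := by positivity
      rw [sub_le_iff_le_add, inv_le_iff_one_le_mul₀ (by linarith)]
      rw [pow_succ] at *
      nlinarith
  have := Real.multipliable_one_add_of_summable hs
  simpa using this

lemma aux_tendsto (q : ℕ) (hq : 2 ≤ q) :
    Filter.Tendsto (fun m => ∏ j ∈ Finset.range m, (1 - ((q : ℝ))⁻¹ ^ (j + 1))⁻¹)
      Filter.atTop (nhds (cq q)) :=
  (aux_mult q hq).hasProd.tendsto_prod_nat

lemma aux_fac (q : ℕ) (hq : 2 ≤ q) (j : ℕ) :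
    0 < 1 - ((q : ℝ))⁻¹ ^ (j + 1) ∧ 1 < (1 - ((q : ℝ))⁻¹ ^ (j + 1))⁻¹ := by
  have hq' : (2:ℝ) ≤ q := by exact_mod_cast hq
  have h0 : (0:ℝ) < (q:ℝ)⁻¹ := by positivity
  have h2 : (q:ℝ)⁻¹ ≤ 1/2 := by
    rw [inv_le_comm₀ (by positivity) (by norm_num)]; norm_num; exact hq
  have h3 : ((q:ℝ)⁻¹) ^ (j+1) ≤ 1/2 :=
    (pow_le_of_le_one h0.le (by linarith) (by omega)).trans h2
  have h4 : 0 < ((q:ℝ)⁻¹) ^ (j+1) := by positivity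
  exact ⟨by linarith, (one_lt_inv₀ (by linarith)).2 (by linarith)⟩

lemma aux_lt (q : ℕ) (hq : 2 ≤ q) (k : ℕ) :
    ∏ j ∈ Finset.range k, (1 - ((q : ℝ))⁻¹ ^ (j + 1))⁻¹ < cq q := by
  have hpos : ∀ m, 0 < ∏ j ∈ Finset.range m, (1 - ((q : ℝ))⁻¹ ^ (j + 1))⁻¹ := fun m =>
    Finset.prod_pos fun j _ => inv_pos.2 (aux_fac q hq j).1
  have hlt : ∀ m, ∏ j ∈ Finset.range m, (1 - ((q : ℝ))⁻¹ ^ (j + 1))⁻¹ <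
      ∏ j ∈ Finset.range (m+1), (1 - ((q : ℝ))⁻¹ ^ (j + 1))⁻¹ := by
    intro m
    rw [Finset.prod_range_succ]
    exact lt_mul_of_one_lt_right (hpos m) (aux_fac q hq m).2
  exact (hlt k).trans_le
    ((monotone_nat_of_le_succ fun m => (hlt m).le).ge_of_tendsto (aux_tendsto q hq) (k+1))

lemma aux_mono (q : ℕ) (hq : 2 ≤ q) : cq q ≤ cq 2 := by
  refine le_of_tendsto_of_tendsto' (aux_tendsto q hq) (aux_tendsto 2 le_rfl) fun m => ?_
  refine Finset.prod_le_prod (fun j _ => (inv_pos.2 (aux_fac q hq j).1).le) fun j _ => ?_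
  refine inv_anti₀ (aux_fac 2 le_rfl j).1 ?_
  have hq' : ((2:ℕ):ℝ) ≤ q := by exact_mod_cast hq
  gcongr

lemma aux_num : cq 2 < 3.463 := by
  have key : ∀ m, (∏ j ∈ Finset.range (10 + m), (1 - (((2:ℕ) : ℝ))⁻¹ ^ (j + 1))⁻¹) *
      (1 - (((2:ℕ) : ℝ))⁻¹ ^ (10 + m))⁻¹ ≤ 3.4629 := by
    intro m
    induction m with
    | zero => norm_num [Finset.prod_range_succ]
    | succ m ih =>
      refine le_trans ?_ ih
      rw [← add_assoc, Finset.prod_range_succ, mul_assoc]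
      refine mul_le_mul_of_nonneg_left ?_
        (Finset.prod_nonneg fun j _ => (inv_pos.2 (aux_fac 2 le_rfl j).1).le)
      rw [← mul_inv]
      have := (aux_fac 2 le_rfl (9+m)).1
      rw [show 9 + m + 1 = 10 + m by ring] at this
      refine inv_anti₀ this ?_
      rw [pow_succ]
      push_cast
      nlinarith [sq_nonneg ((2:ℝ)⁻¹ ^ (10+m))]
  have : cq 2 ≤ 3.4629 := by
    refine le_of_tendsto ((Filter.tendsto_add_atTop_iff_nat 10).2 (aux_tendsto 2 le_rfl))
      (Filter.Eventually.of_forall fun m => ?_)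
    refine le_trans ?_ (key m)
    rw [add_comm m 10]
    have := (aux_fac 2 le_rfl (9+m)).2
    rw [show 9 + m + 1 = 10 + m by ring] at this
    exact le_mul_of_one_le_right
      (Finset.prod_nonneg fun j _ => (inv_pos.2 (aux_fac 2 le_rfl j).1).le) this.le
  norm_num at this ⊢
  linarith

lemma auxExt (F : Type) [Field F] (n k : ℕ) (S' S : Submodule F (Fin n → F)) (h : S' = S)
    (hS' : Module.finrank F S' = k) (hS : Module.finrank F S = k)
    (t' : Fin k → S') (ht' : LinearIndependent F t') (t : Fin k → S) (ht : LinearIndependent F t)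
    (e : ∀ i, (t' i : Fin n → F) = t i) :
    (⟨⟨S', hS'⟩, ⟨t', ht'⟩⟩ : (S : {S : Submodule F (Fin n → F) // Module.finrank F ↥S = k}) ×
        {t : Fin k → S.1 // LinearIndependent F t}) = ⟨⟨S, hS⟩, ⟨t, ht⟩⟩ := by
  subst h
  obtain rfl : t' = t := funext fun i => Subtype.ext (e i)
  rfl

noncomputable def auxEquiv (F : Type) [Field F] [Fintype F] (n k : ℕ) :
    {s : Fin k → (Fin n → F) // LinearIndependent F s} ≃
      (S : {S : Submodule F (Fin n → F) // Module.finrank F ↥S = k}) ×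
        {t : Fin k → S.1 // LinearIndependent F t} where
  toFun s := ⟨⟨Submodule.span F (Set.range s.1), by
      simpa using finrank_span_eq_card s.2⟩,
    ⟨fun i => ⟨s.1 i, Submodule.subset_span ⟨i, rfl⟩⟩, by
      apply LinearIndependent.of_comp (Submodule.subtype _)
      exact s.2⟩⟩
  invFun p := ⟨fun i => (p.2.1 i : Fin n → F), p.2.2.map' (Submodule.subtype _) (by simp)⟩
  left_inv s := rfl
  right_inv := by
    rintro ⟨⟨S, hS⟩, ⟨t, ht⟩⟩
    have hs : Submodule.span F (Set.range fun i => (t i : Fin n → F)) = S := by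
      apply Submodule.eq_of_le_of_finrank_eq
      · rw [Submodule.span_le]; rintro _ ⟨i, rfl⟩; exact (t i).2
      · have := finrank_span_eq_card (ht.map' (Submodule.subtype _) (by simp))
        rw [hS]; exact this.trans (Fintype.card_fin k)
    exact auxExt F n k _ S hs _ hS _ _ t ht fun i => rfl

lemma aux_card_s19 (F : Type) [Field F] [Fintype F] (n k : ℕ) (hk : k ≤ n) :
    ∏ i : Fin k, (Fintype.card F ^ n - Fintype.card F ^ i.1) =
    Nat.card {S : Submodule F (Fin n → F) // Module.finrank F ↥S = k} *
      ∏ i : Fin k, (Fintype.card F ^ k - Fintype.card F ^ i.1) := by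
  classical
  have h1 := card_linearIndependent (K := F) (V := Fin n → F) (k := k) (by simpa using hk)
  rw [Module.finrank_fin_fun] at h1
  rw [← h1, Nat.card_congr (auxEquiv F n k)]
  have : Finite (Submodule F (Fin n → F)) := inferInstance
  have : Fintype {S : Submodule F (Fin n → F) // Module.finrank F ↥S = k} := Fintype.ofFinite _
  rw [Nat.card_sigma, Finset.sum_congr rfl (g := fun _ =>
    ∏ i : Fin k, (Fintype.card F ^ k - Fintype.card F ^ i.1))]
  · simp
  · intro S _
    have h := card_linearIndependent (K := F) (V := S.1) (k := k) S.2.ge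
    rw [h, S.2]

/-- Bounds on the Gaussian binomial coefficient: for a finite field `F` with `q`
elements and `0 ≤ k ≤ n`, the number `N_k` of `k`-dimensional subspaces of `F^n`
satisfies `q^{k(n−k)} ≤ N_k < c_q · q^{k(n−k)}`, where `c_q ≤ c_2 < 3.463`. -/
theorem stmt_19 (F : Type) [Field F] [Fintype F] (q : ℕ) (hq : q = Fintype.card F)
    (n k : ℕ) (hk : k ≤ n)
    (N : ℕ)
    (hN : N = Nat.card {S : Submodule F (Fin n → F) // Module.finrank F ↥S = k}) :
    q ^ (k * (n - k)) ≤ N ∧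
      (N : ℝ) < cq q * (q : ℝ) ^ (k * (n - k)) ∧
      cq q ≤ cq 2 ∧ cq 2 < 3.463 := by
  have h2 : 2 ≤ q := by rw [hq]; exact Fintype.one_lt_card
  have hc := aux_card_s19 F n k hk
  rw [← hq, ← hN] at hc
  rw [Fin.prod_univ_eq_prod_range (fun i => q ^ n - q ^ i),
    Fin.prod_univ_eq_prod_range (fun i => q ^ k - q ^ i)] at hc
  have hpos : 0 < ∏ i ∈ Finset.range k, (q ^ k - q ^ i) := Finset.prod_pos fun i hi =>
    Nat.sub_pos_of_lt (Nat.pow_lt_pow_right h2 (Finset.mem_range.1 hi))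
  refine ⟨?_, ?_, aux_mono q h2, aux_num⟩
  · refine Nat.le_of_mul_le_mul_right ?_ hpos
    rw [← hc, mul_comm k, pow_mul]
    nth_rewrite 2 [← Finset.card_range k]
    rw [← Finset.prod_const, ← Finset.prod_mul_distrib]
    refine Finset.prod_le_prod' fun i _ => ?_
    rw [Nat.mul_sub, ← pow_add, Nat.sub_add_cancel hk]
    exact Nat.sub_le_sub_left (Nat.le_mul_of_pos_left _ (by positivity)) _
  · have hq0 : (0:ℝ) < q := by positivity
    have hB : ((∏ i ∈ Finset.range k, (q ^ k - q ^ i) : ℕ) : ℝ) =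
        (q:ℝ) ^ (k * k) * ∏ j ∈ Finset.range k, (1 - ((q : ℝ))⁻¹ ^ (j + 1)) := by
      rw [← Finset.prod_range_reflect, pow_mul]
      nth_rewrite 5 [← Finset.card_range k]
      rw [← Finset.prod_const, ← Finset.prod_mul_distrib]
      push_cast
      refine Finset.prod_congr rfl fun i hi => ?_
      have hi := Finset.mem_range.1 hi
      rw [Nat.cast_sub (Nat.pow_le_pow_right (by omega) (by omega))]
      push_cast
      have : (q:ℝ)^k = q ^ (k-1-i) * q ^ (i+1) := by rw [← pow_add]; congr 1; omega
      rw [this, inv_pow]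
      field_simp
    have hA : ∏ i ∈ Finset.range k, (q ^ n - q ^ i) ≤ q ^ (n * k) := by
      rw [pow_mul]
      nth_rewrite 2 [← Finset.card_range k]
      rw [← Finset.prod_const]
      exact Finset.prod_le_prod' fun i _ => Nat.sub_le _ _
    rw [hc] at hA
    have hA' : (N:ℝ) * ((∏ i ∈ Finset.range k, (q ^ k - q ^ i) : ℕ) : ℝ) ≤ (q:ℝ) ^ (n*k) := by
      exact_mod_cast hA
    rw [hB] at hA'
    have hP : 0 < ∏ j ∈ Finset.range k, (1 - ((q : ℝ))⁻¹ ^ (j + 1)) :=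
      Finset.prod_pos fun j _ => (aux_fac q h2 j).1
    have hlt := aux_lt q h2 k
    rw [Finset.prod_inv_distrib] at hlt
    have hpw : (q:ℝ)^(n*k) = q^(k*(n-k)) * q^(k*k) := by
      rw [← pow_add, ← mul_add, Nat.sub_add_cancel hk, mul_comm]
    rw [hpw] at hA'
    set P := ∏ j ∈ Finset.range k, (1 - ((q : ℝ))⁻¹ ^ (j + 1))
    have h3 : (N:ℝ) * P ≤ q^(k*(n-k)) := by
      refine le_of_mul_le_mul_right ?_ (show (0:ℝ) < q^(k*k) by positivity)
      linarith
    have h4 : (N:ℝ) ≤ P⁻¹ * q^(k*(n-k)) := by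
      rw [← div_eq_inv_mul, le_div_iff₀ hP]; exact h3
    exact h4.trans_lt (mul_lt_mul_of_pos_right hlt (by positivity))
end
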